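/- arXiv:0812.3415 — 2 statements merged into one kernel-verified Lean document; each statement's English description precedes it below -/
import Mathlib

section
/- Fix real numbers λ₁ > λ₂ > λ₃ > λ₄ with λᵢ+λⱼ > 0 for all i ≠ j and λ₁²+λ₄² ≠ λ₂²+λ₃², and let α₁ < α₂ be the two roots of f̃(t) = (λ₁²−λ₄²)²t² − 2[(λ₁²−λ₂²)(λ₃²−λ₄²) + (λ₁²−λ₃²)(λ₂²−λ₄²)]t + (λ₂²−λ₃²)². Let a, b be real with a > 0, a² > b², and b²/a² < α₁, and let q = (b,0,0,a,0,0) ∈ ℝ⁶ (the equilibrium M¹_{b,a}). Then the Jacobian DG(q) has complex eigenvalues 0 (multiplicity 2) together with four distinct nonzero real numbers A, −A, B, −B with A ≠ B, A, B > 0; i.e. M¹_{b,a} is an unstable equilibrium of saddle-saddle type. -/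
/-!
At `(b,0,0,a,0,0)` the linearization kills the `x₁, y₁` directions and exchanges the planes
`(x₂, y₂)` and `(x₃, y₃)`, so its characteristic polynomial is `X² (X⁴ - τ X² + δ)`
(`charpoly_sparse`). With `p = λ₁²-λ₃²`, `q = λ₁²-λ₂²`, `r = λ₂²-λ₄²`, `s = λ₃²-λ₄²`, all positive,
`τ = 4 (a² (ps+qr) - b² (pq+rs))` and `δ = 16 pqrs (a²-b²)² > 0`, and
`τ² - 4δ = 16 (q-s)² a⁴ f̃(b²/a²)` (`disc_eq`). The factor `q - s` is nonzero by genericity and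
`f̃ > 0` to the left of `α₁`, so the discriminant is positive. The trace term `τ` vanishes at
`b²/a² = t₀ = (ps+qr)/(pq+rs)`, where the discriminant is `≤ 0`; hence `α₁ ≤ t₀`, and `τ > 0` for
`b²/a² < α₁`. Thus `u² - τ u + δ` has two distinct positive roots, whose square roots
are `A` and `B`.
-/

open Polynomial

/-- The Hamiltonian vector field `G` of the integral `I` of the SO(4) free
rigid body with respect to the minus Lie–Poisson structure, in coordinates
`(x₁,x₂,x₃,y₁,y₂,y₃) = (p 0, p 1, p 2, p 3, p 4, p 5)`. -/
noncomputable def rbG (l1 l2 l3 l4 : ℝ) (p : Fin 6 → ℝ) : Fin 6 → ℝ :=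
  ![2*(l2^2-l3^2) * (p 1 * p 2 - p 4 * p 5),
    2*(l3^2-l1^2) * (p 2 * p 0 - p 5 * p 3),
    2*(l1^2-l2^2) * (p 0 * p 1 - p 3 * p 4),
    2*(l4^2-l1^2) * (p 1 * p 5 - p 2 * p 4),
    2*(l4^2-l2^2) * (p 2 * p 3 - p 0 * p 5),
    2*(l4^2-l3^2) * (p 0 * p 4 - p 1 * p 3)]

/-- The Jacobian matrix of `G` at a point `p`. -/
noncomputable def JacG (l1 l2 l3 l4 : ℝ) (p : Fin 6 → ℝ) :
    Matrix (Fin 6) (Fin 6) ℝ :=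
  Matrix.of fun i j => fderiv ℝ (fun q => rbG l1 l2 l3 l4 q i) p (Pi.single j 1)

/-- The quadratic `f̃(t) = S̃₂t² + T̃₂t + Ũ₂` controlling the bifurcations of
the `t₁`-equilibria `M¹_{b,a}`. -/
noncomputable def ftilde (l1 l2 l3 l4 t : ℝ) : ℝ :=
  (l1^2-l4^2)^2 * t^2 -
    2*((l1^2-l2^2)*(l3^2-l4^2) + (l1^2-l3^2)*(l2^2-l4^2)) * t + (l2^2-l3^2)^2

/-- The Jacobian at `(b,0,0,a,0,0)`, written out. -/
lemma JacG_eq (l1 l2 l3 l4 a b : ℝ) :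
    JacG l1 l2 l3 l4 ![b, 0, 0, a, 0, 0] =
      !![0, 0, 0, 0, 0, 0;
         0, 0, 2*(l3^2-l1^2)*b, 0, 0, -(2*(l3^2-l1^2)*a);
         0, 2*(l1^2-l2^2)*b, 0, 0, -(2*(l1^2-l2^2)*a), 0;
         0, 0, 0, 0, 0, 0;
         0, 0, 2*(l4^2-l2^2)*a, 0, 0, -(2*(l4^2-l2^2)*b);
         0, -(2*(l4^2-l3^2)*a), 0, 0, 2*(l4^2-l3^2)*b, 0] := by
  -- every component of `G` has the shape `c (p_i p_j - p_k p_m)`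
  have key : ∀ (c : ℝ) (i j k m : Fin 6) (p v : Fin 6 → ℝ),
      fderiv ℝ (fun q : Fin 6 → ℝ => c * (q i * q j - q k * q m)) p v =
        c * ((p i * v j + p j * v i) - (p k * v m + p m * v k)) := by
    intro c i j k m p v
    have h : ∀ i : Fin 6, HasFDerivAt (fun q : Fin 6 → ℝ => q i)
        (ContinuousLinearMap.proj (R := ℝ) (φ := fun _ : Fin 6 => ℝ) i) p :=
      fun i => hasFDerivAt_apply i p
    have := ((((h i).mul (h j)).sub ((h k).mul (h m))).const_mul c).fderiv
    simp only [Pi.mul_def, Pi.sub_def] at this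
    rw [this]
    simp
  ext i j
  fin_cases i <;>
    simp only [JacG, rbG, Matrix.of_apply, Matrix.cons_val, Fin.zero_eta, Fin.mk_one,
      Fin.reduceFinMk, key] <;>
    fin_cases j <;> simp

lemma charpoly_sparse {R : Type*} [CommRing R] (c₁ c₂ c₃ c₄ c₅ c₆ c₇ c₈ : R) :
    (!![0, 0, 0, 0, 0, 0;
        0, 0, c₁, 0, 0, c₂;
        0, c₃, 0, 0, c₄, 0;
        0, 0, 0, 0, 0, 0;
        0, 0, c₅, 0, 0, c₆;
        0, c₇, 0, 0, c₈, 0] : Matrix (Fin 6) (Fin 6) R).charpoly =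
      X^2 * (X^4 - C (c₁*c₃ + c₂*c₇ + c₅*c₄ + c₆*c₈) * X^2 +
        C ((c₁*c₆ - c₂*c₅) * (c₃*c₈ - c₄*c₇))) := by
  have h : (!![0, 0, 0, 0, 0, 0;
        0, 0, c₁, 0, 0, c₂;
        0, c₃, 0, 0, c₄, 0;
        0, 0, 0, 0, 0, 0;
        0, 0, c₅, 0, 0, c₆;
        0, c₇, 0, 0, c₈, 0] : Matrix (Fin 6) (Fin 6) R).charmatrix =
      !![X, 0, 0, 0, 0, 0;
        0, X, -C c₁, 0, 0, -C c₂;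
        0, -C c₃, X, 0, -C c₄, 0;
        0, 0, 0, X, 0, 0;
        0, 0, -C c₅, 0, X, -C c₆;
        0, -C c₇, 0, 0, -C c₈, X] := by
    ext1 i j
    fin_cases i <;> fin_cases j <;> simp
  rw [Matrix.charpoly, h]
  simp only [map_add, map_mul, map_sub]
  simp [Matrix.det_succ_row_zero, Fin.sum_univ_succ, Fin.succAbove]
  ring

/-- A quadratic `u² - τ u + δ` with `τ, δ > 0` and positive discriminant has two distinct positive
roots, here written as squares. -/
lemma exists_sq_roots {τ δ : ℝ} (hτ : 0 < τ) (hδ : 0 < δ) (hD : 0 < τ^2 - 4*δ) :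
    ∃ A B : ℝ, 0 < A ∧ 0 < B ∧ A ≠ B ∧ A^2 + B^2 = τ ∧ A^2 * B^2 = δ := by
  have hs : 0 < √(τ^2 - 4*δ) := Real.sqrt_pos.2 hD
  have hs2 : √(τ^2 - 4*δ)^2 = τ^2 - 4*δ := Real.sq_sqrt hD.le
  set w := √(τ^2 - 4*δ)
  have hw : w < τ := by nlinarith
  have h₁ : 0 < (τ + w)/2 := by linarith
  have h₂ : 0 < (τ - w)/2 := by linarith
  have e₁ := Real.sq_sqrt h₁.le
  have e₂ := Real.sq_sqrt h₂.le
  refine ⟨√((τ + w)/2), √((τ - w)/2), Real.sqrt_pos.2 h₁, Real.sqrt_pos.2 h₂, ?_, ?_, ?_⟩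
  · intro h
    rw [h] at e₁
    linarith
  · rw [e₁, e₂]; ring
  · rw [e₁, e₂]; linarith

/-- The discriminant, up to a square factor, is `f̃`, in the variable `t = b²/a²`. -/
lemma disc_eq (l1 l2 l3 l4 t : ℝ) :
    (((l1^2-l3^2)*(l3^2-l4^2) + (l1^2-l2^2)*(l2^2-l4^2)) -
        t*((l1^2-l3^2)*(l1^2-l2^2) + (l2^2-l4^2)*(l3^2-l4^2)))^2 -
      4*((l1^2-l3^2)*(l1^2-l2^2)*(l2^2-l4^2)*(l3^2-l4^2))*(1-t)^2 =
    (l1^2+l4^2-l2^2-l3^2)^2 * ftilde l1 l2 l3 l4 t := by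
  unfold ftilde
  ring

/-- if `b²/a² < α₁` (the smaller root of `f̃`), the Jacobian of
`G` at `M¹_{b,a} = (b,0,0,a,0,0)` has eigenvalues `0` (multiplicity 2) and
four distinct nonzero real numbers `A, −A, B, −B` (saddle-saddle spectrum). -/
theorem stmt13 (l1 l2 l3 l4 : ℝ)
    (h12 : l2 < l1) (h23 : l3 < l2) (h34 : l4 < l3)
    (hp12 : 0 < l1 + l2) (hp13 : 0 < l1 + l3) (hp14 : 0 < l1 + l4)
    (hp23 : 0 < l2 + l3) (hp24 : 0 < l2 + l4) (hp34 : 0 < l3 + l4)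
    (hgen : l1^2 + l4^2 ≠ l2^2 + l3^2)
    (α₁ α₂ : ℝ) (hroot : α₁ < α₂)
    (hα₁ : ftilde l1 l2 l3 l4 α₁ = 0) (hα₂ : ftilde l1 l2 l3 l4 α₂ = 0)
    (a b : ℝ) (ha : 0 < a) (hab : b^2 < a^2) (hratio : b^2 / a^2 < α₁) :
    ∃ A B : ℝ, 0 < A ∧ 0 < B ∧ A ≠ B ∧
      ((JacG l1 l2 l3 l4 ![b, 0, 0, a, 0, 0]).map Complex.ofReal).charpoly =
        X^2 * (X - C (A : ℂ)) * (X + C (A : ℂ)) *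
          (X - C (B : ℂ)) * (X + C (B : ℂ)) := by
  have hp : 0 < l1^2 - l3^2 := by nlinarith
  have hq : 0 < l1^2 - l2^2 := by nlinarith
  have hr : 0 < l2^2 - l4^2 := by nlinarith
  have hs : 0 < l3^2 - l4^2 := by nlinarith
  have hc : 0 < (l1^2 - l4^2)^2 := pow_pos (by linarith) 2
  have hg : 0 < (l1^2+l4^2-l2^2-l3^2)^2 :=
    sq_pos_of_ne_zero (fun h => hgen (by linarith))
  have hfac : ∀ t, ftilde l1 l2 l3 l4 t = (l1^2-l4^2)^2 * ((α₁ - t) * (α₂ - t)) := by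
    intro t
    unfold ftilde at *
    have hne : α₁ - α₂ ≠ 0 := by linarith
    apply mul_left_cancel₀ hne
    linear_combination (t - α₂) * hα₁ - (t - α₁) * hα₂
  have hfpos : ∀ t, t < α₁ → 0 < ftilde l1 l2 l3 l4 t := by
    intro t ht
    rw [hfac]
    exact mul_pos hc (mul_pos (by linarith) (by linarith))
  have ha2 : 0 < a^2 := by positivity
  obtain ⟨t, ht⟩ : ∃ t, t = b^2 / a^2 := ⟨_, rfl⟩
  have hb : b^2 = t * a^2 := by rw [ht]; field_simp
  rw [← ht] at hratio
  have ht1 : t < 1 := by rw [ht, div_lt_one ha2]; exact hab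
  have hdisc := disc_eq l1 l2 l3 l4
  have hP : 0 < (l1^2-l3^2)*(l1^2-l2^2)*(l2^2-l4^2)*(l3^2-l4^2) := by positivity
  have hm : 0 < (l1^2-l3^2)*(l1^2-l2^2) + (l2^2-l4^2)*(l3^2-l4^2) := by positivity
  set m := (l1^2-l3^2)*(l1^2-l2^2) + (l2^2-l4^2)*(l3^2-l4^2) with hmdef
  set n := (l1^2-l3^2)*(l3^2-l4^2) + (l1^2-l2^2)*(l2^2-l4^2) with hndef
  set P := (l1^2-l3^2)*(l1^2-l2^2)*(l2^2-l4^2)*(l3^2-l4^2) with hPdef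
  have hnm : 0 < n - t * m := by
    by_contra! hcon
    -- then the zero `n / m` of the trace term lies left of `α₁`, where `f̃ > 0`
    have h0 : n / m < α₁ := lt_of_le_of_lt (by rw [div_le_iff₀ hm]; linarith) hratio
    have h1 := mul_pos hg (hfpos _ h0)
    rw [← hdisc, div_mul_cancel₀ _ hm.ne'] at h1
    nlinarith [mul_nonneg hP.le (sq_nonneg (1 - n/m))]
  have hD := mul_pos hg (hfpos _ hratio)
  rw [← hdisc] at hD
  have ht2 : 0 < (1 - t)^2 := pow_pos (by linarith) 2
  obtain ⟨A, B, hA, hB, hAB, hsum, hprod⟩ :=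
    exists_sq_roots (τ := 4*a^2*(n - t*m)) (δ := 16*(a^2)^2*(P*(1-t)^2))
      (by positivity) (by positivity)
      (by
        have := mul_pos (show 0 < 16*(a^2)^2 by positivity) hD
        linarith)
  refine ⟨A, B, hA, hB, hAB, ?_⟩
  have hreal : (JacG l1 l2 l3 l4 ![b, 0, 0, a, 0, 0]).charpoly =
      X^2 * (X - C A) * (X + C A) * (X - C B) * (X + C B) := by
    rw [JacG_eq, charpoly_sparse]
    have e : (X^2 * (X - C A) * (X + C A) * (X - C B) * (X + C B) : ℝ[X]) =
        X^2 * (X^4 - C (A^2 + B^2) * X^2 + C (A^2 * B^2)) := by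
      simp only [map_add, map_mul, map_pow]
      ring
    rw [e, hsum, hprod]
    congr 3
    · congr 2
      rw [hmdef, hndef]
      linear_combination (-4 * ((l1^2-l3^2)*(l1^2-l2^2) + (l2^2-l4^2)*(l3^2-l4^2))) * hb
    · rw [hPdef]
      linear_combination (16 * ((l1^2-l3^2)*(l1^2-l2^2)*(l2^2-l4^2)*(l3^2-l4^2)) *
        (b^2 + t*a^2 - 2*a^2)) * hb
  have hmap := Matrix.charpoly_map (JacG l1 l2 l3 l4 ![b, 0, 0, a, 0, 0]) Complex.ofRealHom
  rw [hreal] at hmap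
  refine Eq.trans hmap ?_
  simp
end

section
/- Fix real numbers λ₁ > λ₂ > λ₃ > λ₄ with λᵢ+λⱼ > 0 for all i ≠ j and λ₁²+λ₄² ≠ λ₂²+λ₃², and let α₁ < α₂ be the two roots of f̃(t) = (λ₁²−λ₄²)²t² − 2[(λ₁²−λ₂²)(λ₃²−λ₄²) + (λ₁²−λ₃²)(λ₂²−λ₄²)]t + (λ₂²−λ₃²)². Let a, b be real with a > 0, α₁ < b²/a² < α₂, and let q = (b,0,0,a,0,0) ∈ ℝ⁶ (the equilibrium M¹_{b,a}). Then the Jacobian DG(q) has complex eigenvalues 0 (multiplicity 2) together with four numbers of the form A+iB, A−iB, −A+iB, −A−iB with A, B real and nonzero; i.e. M¹_{b,a} is an unstable equilibrium of focus-focus type. -/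
/-!
At `q = (b,0,0,a,0,0)` the rows of the Jacobian belonging to `x₁` and `y₁` vanish, which accounts
for the double eigenvalue `0`, and the remaining block exchanges the planes `(x₂,y₂)` and
`(x₃,y₃)`. Hence the characteristic polynomial is `X² (X⁴ - τ X² + δ)`, where `τ` and `δ` are the
trace and determinant of the square of that block restricted to `(x₂,y₂)` (`charpoly_jacMat`).

The key identity is `τ² - 4δ = 16 (λ₁²+λ₄²-λ₂²-λ₃²)² a⁴ f̃(b²/a²)`. Strictly between the roots of
`f̃` (whose leading coefficient is positive) the right side is negative, so `τ² < 4δ`; in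
particular `δ > 0`. Then `A² = (√δ + τ/2)/2` and `B² = (√δ - τ/2)/2` are positive, and
`(X² + A² + B²)² - 4A²X² = X⁴ - τ X² + δ` splits as required (`exists_focus_focus`).
-/

open Polynomial

/-- The derivative of the quadratic form shared by all components of `rbG`. -/
lemma fderiv_quad (c : ℝ) (i j k l : Fin 6) (p v : Fin 6 → ℝ) :
    fderiv ℝ (fun q : Fin 6 → ℝ => c * (q i * q j - q k * q l)) p v =
      c * (p i * v j + v i * p j - (p k * v l + v k * p l)) := by
  have h (m : Fin 6) : HasFDerivAt (fun q : Fin 6 → ℝ => q m)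
      (ContinuousLinearMap.proj (R := ℝ) (φ := fun _ : Fin 6 => ℝ) m) p := hasFDerivAt_apply m p
  have hd := (((h i).mul (h j)).sub ((h k).mul (h l))).const_mul c
  rw [show fderiv ℝ (fun q : Fin 6 → ℝ => c * (q i * q j - q k * q l)) p = _ from hd.fderiv]
  simp only [smul_apply, sub_apply, add_apply,
    ContinuousLinearMap.proj_apply, smul_eq_mul]
  ring

/-- The Jacobian at `(b,0,0,a,0,0)`, written with
`P = λ₁²-λ₂²`, `Q = λ₁²-λ₃²`, `R = λ₂²-λ₄²`, `S = λ₃²-λ₄²`. -/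
def jacMat {K : Type*} [CommRing K] (P Q R S a b : K) : Matrix (Fin 6) (Fin 6) K :=
  !![0, 0, 0, 0, 0, 0;
     0, 0, -2 * Q * b, 0, 0, 2 * Q * a;
     0, 2 * P * b, 0, 0, -2 * P * a, 0;
     0, 0, 0, 0, 0, 0;
     0, 0, -2 * R * a, 0, 0, 2 * R * b;
     0, 2 * S * a, 0, 0, -2 * S * b, 0]

lemma jacG_eq (l1 l2 l3 l4 a b : ℝ) :
    JacG l1 l2 l3 l4 ![b, 0, 0, a, 0, 0] =
      jacMat (l1^2-l2^2) (l1^2-l3^2) (l2^2-l4^2) (l3^2-l4^2) a b := by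
  ext i j
  fin_cases i <;>
    simp only [JacG, rbG, Matrix.of_apply, Fin.mk_one, Fin.zero_eta, Fin.reduceFinMk,
      Matrix.cons_val, Matrix.cons_val_zero, Matrix.cons_val_one, fderiv_quad] <;>
    fin_cases j <;> simp [jacMat] <;> ring

lemma charpoly_jacMat (P Q R S a b : ℂ) :
    (jacMat P Q R S a b).charpoly =
      X^2 * (X^4 + C (4 * (Q * (P*b^2 - S*a^2) + R * (S*b^2 - P*a^2))) * X^2
        + C (16 * P * Q * R * S * (a^2 - b^2)^2)) := by
  simp [Matrix.charpoly, Matrix.charmatrix, jacMat, Matrix.det_succ_row_zero, Fin.sum_univ_succ,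
    Fin.succAbove, Matrix.diagonal]
  rw [show (C 2 : ℂ[X]) = 2 from rfl, show (C 4 : ℂ[X]) = 4 from rfl,
    show (C 16 : ℂ[X]) = 16 from rfl]
  ring

/-- The last two equations say that the polynomial with roots `±A ± iB`, which is
`X⁴ - 2(A² - B²) X² + (A² + B²)²`, equals `X⁴ - τ X² + δ`. -/
lemma exists_focus_focus (τ δ : ℝ) (h : τ^2 < 4 * δ) :
    ∃ A B : ℝ, A ≠ 0 ∧ B ≠ 0 ∧ 2 * (A^2 - B^2) = τ ∧ (A^2 + B^2)^2 = δ := by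
  have hδ : 0 ≤ δ := by nlinarith [sq_nonneg τ]
  have hs := Real.sq_sqrt hδ
  have habs : |τ| < 2 * √δ := abs_lt_of_sq_lt_sq (by nlinarith) (by positivity)
  obtain ⟨h1, h2⟩ := abs_lt.mp habs
  have hA : 0 < (√δ + τ / 2) / 2 := by linarith
  have hB : 0 < (√δ - τ / 2) / 2 := by linarith
  refine ⟨√((√δ + τ / 2) / 2), √((√δ - τ / 2) / 2), (Real.sqrt_pos.2 hA).ne',
    (Real.sqrt_pos.2 hB).ne', ?_, ?_⟩
  · rw [Real.sq_sqrt hA.le, Real.sq_sqrt hB.le]; ring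
  · rw [Real.sq_sqrt hA.le, Real.sq_sqrt hB.le]; linear_combination hs

/-- Two distinct roots `α₁`, `α₂` give `f̃(t) = (λ₁²-λ₄²)² (t-α₁)(t-α₂)`, hence the sign. -/
lemma ftilde_neg {l1 l2 l3 l4 α₁ α₂ t : ℝ} (hlead : 0 < (l1^2-l4^2)^2)
    (hα₁ : ftilde l1 l2 l3 l4 α₁ = 0) (hα₂ : ftilde l1 l2 l3 l4 α₂ = 0)
    (h1 : α₁ < t) (h2 : t < α₂) : ftilde l1 l2 l3 l4 t < 0 := by
  have key : (α₂ - α₁) * ftilde l1 l2 l3 l4 t =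
      (α₂ - α₁) * ((l1^2-l4^2)^2 * ((t - α₁) * (t - α₂))) := by
    unfold ftilde at *
    linear_combination (α₂ - t) * hα₁ + (t - α₁) * hα₂
  rw [mul_left_cancel₀ (by linarith) key]
  exact mul_neg_of_pos_of_neg hlead (mul_neg_of_pos_of_neg (by linarith) (by linarith))

/-- if `α₁ < b²/a² < α₂` (the roots of `f̃`), the Jacobian of
`G` at `M¹_{b,a} = (b,0,0,a,0,0)` has eigenvalues `0` (multiplicity 2) and
four numbers `±A ± iB` with `A, B` real nonzero (focus-focus spectrum). -/
theorem stmt14 (l1 l2 l3 l4 : ℝ)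
    (h12 : l2 < l1) (h23 : l3 < l2) (h34 : l4 < l3)
    (hp12 : 0 < l1 + l2) (hp13 : 0 < l1 + l3) (hp14 : 0 < l1 + l4)
    (hp23 : 0 < l2 + l3) (hp24 : 0 < l2 + l4) (hp34 : 0 < l3 + l4)
    (hgen : l1^2 + l4^2 ≠ l2^2 + l3^2)
    (α₁ α₂ : ℝ) (hroot : α₁ < α₂)
    (hα₁ : ftilde l1 l2 l3 l4 α₁ = 0) (hα₂ : ftilde l1 l2 l3 l4 α₂ = 0)
    (a b : ℝ) (ha : 0 < a) (hr1 : α₁ < b^2 / a^2) (hr2 : b^2 / a^2 < α₂) :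
    ∃ A B : ℝ, A ≠ 0 ∧ B ≠ 0 ∧
      ((JacG l1 l2 l3 l4 ![b, 0, 0, a, 0, 0]).map Complex.ofReal).charpoly =
        X^2 * (X - C ((A : ℂ) + (B : ℂ) * Complex.I)) *
          (X - C ((A : ℂ) - (B : ℂ) * Complex.I)) *
          (X - C (-(A : ℂ) + (B : ℂ) * Complex.I)) *
          (X - C (-(A : ℂ) - (B : ℂ) * Complex.I)) := by
  have hlead : 0 < (l1^2-l4^2)^2 := by
    have : 0 < (l1 - l4) * (l1 + l4) := mul_pos (by linarith) hp14
    have : 0 < l1^2 - l4^2 := by linarith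
    positivity
  have hf := ftilde_neg hlead hα₁ hα₂ hr1 hr2
  have hg : 0 < (l1^2 + l4^2 - l2^2 - l3^2)^2 := by
    have : l1^2 + l4^2 - l2^2 - l3^2 ≠ 0 := fun h => hgen (by linarith)
    positivity
  set τ : ℝ := -(4 * ((l1^2-l3^2) * ((l1^2-l2^2)*b^2 - (l3^2-l4^2)*a^2)
    + (l2^2-l4^2) * ((l3^2-l4^2)*b^2 - (l1^2-l2^2)*a^2))) with hτ
  set δ : ℝ := 16 * (l1^2-l2^2) * (l1^2-l3^2) * (l2^2-l4^2) * (l3^2-l4^2) * (a^2 - b^2)^2 with hδ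
  have hdisc : τ^2 - 4 * δ =
      16 * (l1^2 + l4^2 - l2^2 - l3^2)^2 * a^4 * ftilde l1 l2 l3 l4 (b^2 / a^2) := by
    rw [hτ, hδ]
    unfold ftilde
    field_simp
    ring
  have hneg : τ^2 - 4 * δ < 0 := by
    rw [hdisc]
    exact mul_neg_of_pos_of_neg (by positivity) hf
  obtain ⟨A, B, hA, hB, hAB, hAB'⟩ := exists_focus_focus τ δ (by linarith)
  refine ⟨A, B, hA, hB, ?_⟩
  have hmap : (JacG l1 l2 l3 l4 ![b, 0, 0, a, 0, 0]).map Complex.ofReal =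
      jacMat ((l1:ℂ)^2-(l2:ℂ)^2) ((l1:ℂ)^2-(l3:ℂ)^2) ((l2:ℂ)^2-(l4:ℂ)^2) ((l3:ℂ)^2-(l4:ℂ)^2) a b := by
    rw [jacG_eq]
    ext i j
    fin_cases i <;> fin_cases j <;> simp [jacMat]
  rw [hmap, charpoly_jacMat]
  have e1 : (4 * (((l1:ℂ)^2-(l3:ℂ)^2) * (((l1:ℂ)^2-(l2:ℂ)^2)*(b:ℂ)^2 - ((l3:ℂ)^2-(l4:ℂ)^2)*(a:ℂ)^2)
      + ((l2:ℂ)^2-(l4:ℂ)^2) * (((l3:ℂ)^2-(l4:ℂ)^2)*(b:ℂ)^2 - ((l1:ℂ)^2-(l2:ℂ)^2)*(a:ℂ)^2))) =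
      -(2 * ((A:ℂ)^2 - (B:ℂ)^2)) := by
    have := congrArg Complex.ofReal (hAB.trans hτ)
    push_cast at this
    linear_combination this
  have e2 : 16 * ((l1:ℂ)^2-(l2:ℂ)^2) * ((l1:ℂ)^2-(l3:ℂ)^2) * ((l2:ℂ)^2-(l4:ℂ)^2)
      * ((l3:ℂ)^2-(l4:ℂ)^2) * ((a:ℂ)^2 - (b:ℂ)^2)^2 = ((A:ℂ)^2 + (B:ℂ)^2)^2 := by
    have := congrArg Complex.ofReal (hAB'.trans hδ)
    push_cast at this
    linear_combination -this
  rw [e1, e2]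
  have hI : (C Complex.I : ℂ[X])^2 = -1 := by
    rw [← C_pow, Complex.I_sq]; simp
  simp only [map_add, map_sub, map_mul, map_neg, map_pow, map_ofNat]
  -- Pairing conjugate roots leaves real quadratic factors `(x ∓ u)² + v²`.
  have hX : ∀ x u v i : ℂ[X], i^2 = -1 →
      x^2 * (x^4 + -(2 * (u^2 - v^2)) * x^2 + (u^2 + v^2)^2) =
      x^2 * (x - (u + v * i)) * (x - (u - v * i)) * (x - (-u + v * i)) * (x - (-u - v * i)) := by
    intro x u v i hi
    have e3 : (x - (u + v * i)) * (x - (u - v * i)) = (x - u)^2 + v^2 := by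
      linear_combination -v^2 * hi
    have e4 : (x - (-u + v * i)) * (x - (-u - v * i)) = (x + u)^2 + v^2 := by
      linear_combination -v^2 * hi
    calc _ = x^2 * ((x - u)^2 + v^2) * ((x + u)^2 + v^2) := by ring
      _ = _ := by rw [← e3, ← e4]; ring
  exact hX _ _ _ _ hI
end
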